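/- arXiv:2503.16002 — 4 statements merged into one kernel-verified Lean document; each statement's English description precedes it below -/
import Mathlib

section
/- For every delivery instance and every allocation π, there exists a non-wasteful allocation π' such that for every agent i ∈ N, π'_i and π_i contain exactly the same leaves (π'_i ∩ leaves(G) = π_i ∩ leaves(G)) and cost(π'_i) ≤ cost(π_i). -/
/-- A delivery instance: a finite tree rooted at the hub (encoded by a parent
function `par`; the edges of the tree are the pairs `{v, par v}` for `v ≠ hub`),
positive edge weights (`w v` is the weight of the edge between `v` and its
parent, for `v ≠ hub`), and `n` agents. -/
structure DeliveryInstance where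
  V : Type
  fintypeV : Fintype V
  decEqV : DecidableEq V
  hub : V
  par : V → V
  w : V → ℝ
  par_hub : par hub = hub
  reaches_hub : ∀ v : V, ∃ k : ℕ, par^[k] v = hub
  w_pos : ∀ v : V, v ≠ hub → 0 < w v
  n : ℕ
  n_pos : 0 < n

attribute [instance] DeliveryInstance.fintypeV DeliveryInstance.decEqV

namespace DeliveryInstance

variable (I : DeliveryInstance)

/-- `u` lies on the path from the hub to `v` (equivalently, `u` is a weak
ancestor of `v` in the tree rooted at the hub). -/
def Anc (u v : I.V) : Prop := ∃ k : ℕ, I.par^[k] v = u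

/-- A leaf of the tree rooted at the hub: a vertex with no children. -/
def IsLeaf (v : I.V) : Prop := ∀ u : I.V, I.par u = v → u = v

/-- The set of leaves of the topology. -/
def leaves : Set I.V := {v : I.V | I.IsLeaf v}

/-- The instance is unweighted if every edge has weight 1. -/
def Unweighted : Prop := ∀ v : I.V, v ≠ I.hub → I.w v = 1

/-- The cost of servicing a set `A` of orders: the total weight of the edges of
the tree that lie on the path from the hub to some vertex of `A` (the edge
between `u ≠ hub` and its parent lies on such a path iff `u` is a weak ancestor
of a member of `A`).  In particular `cost ∅ = 0`. -/
noncomputable def cost (A : Set I.V) : ℝ :=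
  ∑ u : I.V, Set.indicator {u : I.V | u ≠ I.hub ∧ ∃ v ∈ A, I.Anc u v} I.w u

/-- The bundle of agent `i` under allocation `π`: the set of orders serviced by `i`. -/
def bundle (π : I.V → Fin I.n) (i : Fin I.n) : Set I.V :=
  {v : I.V | v ≠ I.hub ∧ π v = i}

/-- An allocation is non-wasteful if every order `v` is serviced by an agent
that also services some leaf of the subtree rooted at `v`. -/
def NonWasteful (π : I.V → Fin I.n) : Prop :=
  ∀ v : I.V, v ≠ I.hub → ∃ l : I.V, I.IsLeaf l ∧ I.Anc v l ∧ π l = π v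

/-- Total (utilitarian) cost of an allocation. -/
noncomputable def totalCost (π : I.V → Fin I.n) : ℝ :=
  ∑ i : Fin I.n, I.cost (I.bundle π i)

/-- The maximum bundle cost of an allocation. -/
noncomputable def maxCost (π : I.V → Fin I.n) : ℝ :=
  Finset.univ.sup' ⟨⟨0, I.n_pos⟩, Finset.mem_univ _⟩ fun i : Fin I.n => I.cost (I.bundle π i)

/-- The minimax (MMS) share of the instance: the minimum over all allocations
of the maximum bundle cost. -/
noncomputable def MMSshare : ℝ :=
  Finset.univ.inf' ⟨fun _ => ⟨0, I.n_pos⟩, Finset.mem_univ _⟩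
    fun π : I.V → Fin I.n => I.maxCost π

/-- An allocation is MMS if every bundle costs at most the MMS share. -/
def IsMMS (π : I.V → Fin I.n) : Prop :=
  ∀ i : Fin I.n, I.cost (I.bundle π i) ≤ I.MMSshare

/-- Pareto optimality: no allocation makes every agent weakly better off and
some agent strictly better off. -/
def ParetoOptimal (π : I.V → Fin I.n) : Prop :=
  ¬ ∃ π' : I.V → Fin I.n,
      (∀ i : Fin I.n, I.cost (I.bundle π' i) ≤ I.cost (I.bundle π i)) ∧
      ∃ j : Fin I.n, I.cost (I.bundle π' j) < I.cost (I.bundle π j)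

/-- Utilitarian optimality: minimizes the sum of bundle costs. -/
def UtilitarianOptimal (π : I.V → Fin I.n) : Prop :=
  ∀ π' : I.V → Fin I.n, I.totalCost π ≤ I.totalCost π'

/-- Egalitarian optimality: minimizes the maximum bundle cost. -/
def EgalitarianOptimal (π : I.V → Fin I.n) : Prop :=
  ∀ π' : I.V → Fin I.n, I.maxCost π ≤ I.maxCost π'

/-- Envy-freeness. -/
def EF (π : I.V → Fin I.n) : Prop :=
  ∀ i j : Fin I.n, I.cost (I.bundle π i) ≤ I.cost (I.bundle π j)

/-- Envy-freeness up to one order. -/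
def EF1 (π : I.V → Fin I.n) : Prop :=
  ∀ i j : Fin I.n,
    I.bundle π i = ∅ ∨ ∃ v ∈ I.bundle π i, I.cost (I.bundle π i \ {v}) ≤ I.cost (I.bundle π j)

end DeliveryInstance

/-! The vertices of a tree rooted at the hub are partially ordered by ancestry, with the hub at the
bottom and the leaves as the maximal elements. As the tree is finite, every vertex `v` lies below
some leaf `l v`, and `l` fixes every leaf. Reassigning each order `v` to the agent `π (l v)`
therefore moves no leaf, is non-wasteful, and only makes an agent visit vertices that lie on the way
to leaves already in that agent's bundle. -/

namespace DeliveryInstance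

variable {I : DeliveryInstance} {u v : I.V}

open Function

theorem eq_hub_of_isPeriodicPt {p : ℕ} (hp : 0 < p) (hv : IsPeriodicPt I.par p v) : v = I.hub := by
  obtain ⟨k, hk⟩ := I.reaches_hub v
  calc
    v = I.par^[p * k] v := (hv.mul_const k).eq.symm
    _ = I.par^[p * k - k] (I.par^[k] v) := by
      rw [← iterate_add_apply, Nat.sub_add_cancel (Nat.le_mul_of_pos_left k hp)]
    _ = I.hub := by rw [hk, iterate_fixed I.par_hub]

theorem Anc.trans {x : I.V} (huv : I.Anc u v) (hvx : I.Anc v x) : I.Anc u x := by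
  obtain ⟨j, rfl⟩ := huv
  obtain ⟨k, rfl⟩ := hvx
  exact ⟨j + k, iterate_add_apply ..⟩

theorem Anc.antisymm (huv : I.Anc u v) (hvu : I.Anc v u) : u = v := by
  obtain ⟨j, rfl⟩ := huv
  obtain ⟨k, hk⟩ := hvu
  rcases Nat.eq_zero_or_pos j with rfl | hj
  · rfl
  · have hv : v = I.hub :=
      eq_hub_of_isPeriodicPt (Nat.add_pos_right k hj) ((iterate_add_apply ..).trans hk)
    rw [hv, iterate_fixed I.par_hub]

/-- The tree order on the vertices: `u ≤ v` means that `u` lies on the path from the hub to `v`. -/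
instance : PartialOrder I.V where
  le := I.Anc
  le_refl _ := ⟨0, rfl⟩
  le_trans _ _ _ := Anc.trans
  le_antisymm _ _ := Anc.antisymm

instance : OrderBot I.V where
  bot := I.hub
  bot_le := I.reaches_hub

theorem par_le (v : I.V) : I.par v ≤ v :=
  ⟨1, rfl⟩

theorem IsLeaf.eq_of_le (hv : I.IsLeaf v) (hvu : v ≤ u) : u = v := by
  obtain ⟨k, hk⟩ := hvu
  induction k with
  | zero => exact hk
  | succ k ih => exact ih (hv _ (by rwa [iterate_succ_apply'] at hk))

theorem isLeaf_of_isMax (hv : IsMax v) : I.IsLeaf v := fun u hu =>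
  (hv.eq_of_le (hu ▸ par_le u)).symm

theorem exists_le_isLeaf (v : I.V) : ∃ l, v ≤ l ∧ I.IsLeaf l := by
  obtain ⟨l, hvl, hl⟩ := Set.univ.toFinite.exists_le_maximal (Set.mem_univ v)
  exact ⟨l, hvl, isLeaf_of_isMax fun _ hlu => hl.le_of_ge (Set.mem_univ _) hlu⟩

theorem cost_le_cost_of_subset_lowerClosure {A B : Set I.V} (hAB : A ⊆ lowerClosure B) :
    I.cost A ≤ I.cost B := by
  have hsub : {u | u ≠ I.hub ∧ ∃ v ∈ A, I.Anc u v} ⊆ {u | u ≠ I.hub ∧ ∃ v ∈ B, I.Anc u v} :=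
    fun u ⟨hu, huA⟩ => ⟨hu, lowerClosure_min hAB (lowerClosure B).lower huA⟩
  exact Finset.sum_le_sum fun u _ => Set.indicator_apply_le'
    (fun hu => (Set.indicator_of_mem (hsub hu) I.w).ge)
    (fun _ => Set.indicator_nonneg (fun v hv => (I.w_pos v hv.1).le) u)

section Reassignment

variable {l : I.V → I.V} (π : I.V → Fin I.n)

theorem nonWasteful_comp (hle : ∀ v, v ≤ l v) (hleaf : ∀ v, I.IsLeaf (l v)) :
    I.NonWasteful (π ∘ l) := fun v _ =>
  ⟨l v, hleaf v, hle v, congrArg π ((hleaf v).eq_of_le (hle (l v)))⟩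

theorem bundle_comp_inter_leaves (hle : ∀ v, v ≤ l v) (i : Fin I.n) :
    I.bundle (π ∘ l) i ∩ I.leaves = I.bundle π i ∩ I.leaves := by
  ext v
  refine and_congr_left fun hv => and_congr_right fun _ => ?_
  have hlv : l v = v := IsLeaf.eq_of_le hv (hle v)
  rw [comp_apply, hlv]

theorem bundle_comp_subset_lowerClosure (hle : ∀ v, v ≤ l v) (i : Fin I.n) :
    I.bundle (π ∘ l) i ⊆ lowerClosure (I.bundle π i) := fun v ⟨hv, hi⟩ =>
  ⟨l v, ⟨ne_bot_of_le_ne_bot hv (hle v), hi⟩, hle v⟩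

end Reassignment

end DeliveryInstance

/-- For every delivery instance and every allocation `π`, there
is a non-wasteful allocation `π'` such that every agent's bundle contains
exactly the same leaves as before, and costs at most as much as before. -/
theorem stmt0 (I : DeliveryInstance) (π : I.V → Fin I.n) :
    ∃ π' : I.V → Fin I.n, I.NonWasteful π' ∧
      ∀ i : Fin I.n,
        I.bundle π' i ∩ I.leaves = I.bundle π i ∩ I.leaves ∧
        I.cost (I.bundle π' i) ≤ I.cost (I.bundle π i) := by
  choose l hle hleaf using DeliveryInstance.exists_le_isLeaf (I := I)
  exact ⟨π ∘ l, DeliveryInstance.nonWasteful_comp π hle hleaf, fun i =>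
    ⟨DeliveryInstance.bundle_comp_inter_leaves π hle i,
      DeliveryInstance.cost_le_cost_of_subset_lowerClosure
        (DeliveryInstance.bundle_comp_subset_lowerClosure π hle i)⟩⟩
end

section
/- For all integers n ≥ 1 and m ≥ n+1, there exists an unweighted delivery instance with n agents and m orders (a path with one endpoint at the hub whose other endpoint has n leaves attached) that admits a non-wasteful allocation π with total cost Σ_{i∈N} cost(π_i) = n·(m−n+1), while the minimum total cost over all allocations of this instance equals m. -/
/-!
Count, for each edge, the agents who have to traverse it: the total cost of an allocation is the
sum of the edge weights multiplied by these counts. Each edge is traversed by at least one agent,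
the one who services its lower endpoint, so the total cost is at least the total edge weight, and
giving every order to a single agent attains this bound. In a broom every handle vertex lies above
every leaf, so as soon as each agent services a leaf, the allocation is non-wasteful whatever it
does on the handle; all `n` agents then traverse all of the handle, while only one agent goes to
each leaf.
-/

namespace DeliveryInstance

variable (I : DeliveryInstance)

theorem anc_refl (v : I.V) : I.Anc v v := ⟨0, rfl⟩

variable {I}

theorem IsLeaf.anc_iff {l v : I.V} (hl : I.IsLeaf l) : I.Anc l v ↔ v = l := by
  refine ⟨?_, fun h => h ▸ I.anc_refl l⟩
  rintro ⟨t, ht⟩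
  induction t with
  | zero => exact ht
  | succ t ih => exact ih (hl _ ((Function.iterate_succ_apply' I.par t v).symm.trans ht))

variable (I)

/-- The total weight of the edges of the tree. -/
noncomputable def totalWeight : ℝ := ∑ u with u ≠ I.hub, I.w u

open Classical in
/-- The crew of `u`: the agents that have to traverse the edge between `u` and its parent,
because they service an order in the subtree rooted at `u`. -/
noncomputable def crew (π : I.V → Fin I.n) (u : I.V) : Finset (Fin I.n) :=
  {i | ∃ v ∈ I.bundle π i, I.Anc u v}

variable {I}

theorem mem_crew {π : I.V → Fin I.n} {u : I.V} {i : Fin I.n} :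
    i ∈ I.crew π u ↔ ∃ v ∈ I.bundle π i, I.Anc u v := by
  simp only [crew, Finset.mem_filter_univ]

theorem mem_crew_of_anc {π : I.V → Fin I.n} {u v : I.V} (hv : v ≠ I.hub) (huv : I.Anc u v) :
    π v ∈ I.crew π u :=
  mem_crew.2 ⟨v, ⟨hv, rfl⟩, huv⟩

theorem IsLeaf.crew_eq {π : I.V → Fin I.n} {l : I.V} (hl : I.IsLeaf l) (hne : l ≠ I.hub) :
    I.crew π l = {π l} := by
  ext i
  simp only [mem_crew, hl.anc_iff, exists_eq_right, Finset.mem_singleton]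
  exact ⟨fun h => h.2.symm, fun h => ⟨hne, h.symm⟩⟩

theorem crew_const (i : Fin I.n) {u : I.V} (hu : u ≠ I.hub) : I.crew (fun _ => i) u = {i} :=
  Finset.eq_singleton_iff_unique_mem.2
    ⟨mem_crew_of_anc (π := fun _ => i) hu (I.anc_refl u), fun _ hj =>
      let ⟨_, hv, _⟩ := mem_crew.1 hj
      hv.2.symm⟩

theorem totalCost_eq_sum_card_crew_mul (π : I.V → Fin I.n) :
    I.totalCost π = ∑ u with u ≠ I.hub, ((I.crew π u).card : ℝ) * I.w u := by
  classical
  simp only [totalCost, cost]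
  rw [Finset.sum_comm, Finset.sum_filter]
  refine Finset.sum_congr rfl fun u _ => ?_
  split_ifs with hu
  · simp only [Set.indicator_apply, Set.mem_ofPred_eq, hu, ne_eq, not_false_eq_true, true_and,
      ← mem_crew, Finset.sum_ite_mem, Finset.univ_inter, Finset.sum_const, nsmul_eq_mul]
  · exact Finset.sum_eq_zero fun i _ => Set.indicator_of_notMem (fun h => hu h.1) _

theorem totalWeight_le_totalCost (π : I.V → Fin I.n) : I.totalWeight ≤ I.totalCost π := by
  rw [totalCost_eq_sum_card_crew_mul]
  refine Finset.sum_le_sum fun u hu => ?_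
  have hne : u ≠ I.hub := (Finset.mem_filter.1 hu).2
  have one_le_card : 1 ≤ (I.crew π u).card :=
    Finset.card_pos.2 ⟨π u, mem_crew_of_anc hne (I.anc_refl u)⟩
  exact le_mul_of_one_le_left (I.w_pos u hne).le (mod_cast one_le_card)

theorem totalCost_const (i : Fin I.n) : I.totalCost (fun _ => i) = I.totalWeight := by
  rw [totalCost_eq_sum_card_crew_mul]
  refine Finset.sum_congr rfl fun u hu => ?_
  rw [crew_const i (Finset.mem_filter.1 hu).2, Finset.card_singleton, Nat.cast_one, one_mul]

theorem Unweighted.totalWeight_eq_card (hI : I.Unweighted) :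
    I.totalWeight = Fintype.card {v : I.V // v ≠ I.hub} := by
  rw [totalWeight, Finset.sum_congr rfl fun u hu => hI u (Finset.mem_filter.1 hu).2,
    Finset.sum_const, nsmul_one, Fintype.card_subtype]

theorem Unweighted.totalCost_eq_sum_card_crew (hI : I.Unweighted) (π : I.V → Fin I.n) :
    I.totalCost π = ∑ u with u ≠ I.hub, ((I.crew π u).card : ℝ) := by
  rw [totalCost_eq_sum_card_crew_mul]
  refine Finset.sum_congr rfl fun u hu => ?_
  rw [hI u (Finset.mem_filter.1 hu).2, mul_one]

end DeliveryInstance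

theorem eq_inl_zero_or_inl_succ_or_inr {β : Type*} {k : ℕ} (v : Fin (k + 1) ⊕ β) :
    v = Sum.inl 0 ∨ (∃ i : Fin k, v = Sum.inl i.succ) ∨ ∃ b, v = Sum.inr b := by
  rcases v with i | b
  · exact (Fin.eq_zero_or_eq_succ i).imp (congrArg Sum.inl) fun ⟨i', hi'⟩ =>
      Or.inl ⟨i', congrArg Sum.inl hi'⟩
  · exact Or.inr (Or.inr ⟨b, rfl⟩)

theorem sum_ne_inl_zero {M β : Type*} [AddCommMonoid M] [Fintype β] [DecidableEq β] {k : ℕ}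
    (f : Fin (k + 1) ⊕ β → M) :
    ∑ u with u ≠ Sum.inl 0, f u = ∑ i : Fin k, f (Sum.inl i.succ) + ∑ b, f (Sum.inr b) := by
  simp [Finset.sum_filter, Fin.sum_univ_succ, Fin.succ_ne_zero]

/-- The parent map of the broom: `Sum.inl i` is the vertex at depth `i` of the handle, so that
`Sum.inl 0` is the hub, and `Sum.inr j` is a leaf attached to the far end of the handle. -/
def broomPar (k l : ℕ) : Fin (k + 1) ⊕ Fin l → Fin (k + 1) ⊕ Fin l :=
  Sum.elim (fun i => Sum.inl (Order.pred i)) fun _ => Sum.inl (Fin.last k)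

theorem exists_iterate_broomPar_inl {k : ℕ} (l : ℕ) {i i' : Fin (k + 1)} (h : i ≤ i') :
    ∃ t : ℕ, (broomPar k l)^[t] (Sum.inl i') = Sum.inl i := by
  obtain ⟨t, rfl⟩ := exists_pred_iterate_iff_le.2 h
  have semiconj : Function.Semiconj Sum.inl Order.pred (broomPar k l) := fun _ => rfl
  exact ⟨t, (semiconj.iterate_right t i').symm⟩

theorem exists_iterate_broomPar_inr {k l : ℕ} (i : Fin (k + 1)) (j : Fin l) :
    ∃ t : ℕ, (broomPar k l)^[t] (Sum.inr j) = Sum.inl i :=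
  let ⟨t, ht⟩ := exists_iterate_broomPar_inl l i.le_last
  ⟨t + 1, ht⟩

/-- The broom: the unweighted instance with `n` agents on a path of `k` edges starting at the hub
whose other endpoint has `l` further vertices attached. -/
def broom (n k l : ℕ) [NeZero n] : DeliveryInstance where
  V := Fin (k + 1) ⊕ Fin l
  fintypeV := inferInstance
  decEqV := inferInstance
  hub := Sum.inl 0
  par := broomPar k l
  w := 1
  par_hub := congrArg Sum.inl Order.pred_bot
  reaches_hub
    | Sum.inl i => exists_iterate_broomPar_inl l i.zero_le
    | Sum.inr j => exists_iterate_broomPar_inr 0 j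
  w_pos _ _ := one_pos
  n := n
  n_pos := Nat.pos_of_neZero n

section Broom

variable {n k l : ℕ} [NeZero n]

theorem unweighted_broom : (broom n k l).Unweighted := fun _ _ => rfl

theorem card_ne_hub_broom :
    Fintype.card {v : (broom n k l).V // v ≠ (broom n k l).hub} = k + l := by
  have card_V : Fintype.card (broom n k l).V = k + 1 + l := by
    change Fintype.card (Fin (k + 1) ⊕ Fin l) = k + 1 + l
    simp only [Fintype.card_sum, Fintype.card_fin]
  rw [Fintype.card_subtype_compl, Fintype.card_subtype_eq, card_V]
  omega

theorem anc_broom_inl_inr (i : Fin (k + 1)) (j : Fin l) :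
    (broom n k l).Anc (Sum.inl i) (Sum.inr j) :=
  exists_iterate_broomPar_inr i j

theorem isLeaf_broom_inr (j : Fin l) : (broom n k l).IsLeaf (Sum.inr j) := by
  rintro (_ | _) h <;> cases h

variable {π : (broom n k l).V → Fin (broom n k l).n}

theorem nonWasteful_broom (hπ : Function.Surjective fun j => π (Sum.inr j)) :
    (broom n k l).NonWasteful π := by
  rintro (i | j) _
  · obtain ⟨j, hj⟩ := hπ (π (Sum.inl i))
    exact ⟨Sum.inr j, isLeaf_broom_inr j, anc_broom_inl_inr i j, hj⟩
  · exact ⟨Sum.inr j, isLeaf_broom_inr j, (broom n k l).anc_refl _, rfl⟩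

theorem crew_broom_inl (hπ : Function.Surjective fun j => π (Sum.inr j)) (i : Fin (k + 1)) :
    (broom n k l).crew π (Sum.inl i) = Finset.univ := by
  refine Finset.eq_univ_of_forall fun a => ?_
  obtain ⟨j, rfl⟩ := hπ a
  exact DeliveryInstance.mem_crew_of_anc Sum.inr_ne_inl (anc_broom_inl_inr i j)

theorem totalCost_broom (hπ : Function.Surjective fun j => π (Sum.inr j)) :
    (broom n k l).totalCost π = n * k + l := by
  have card_crew_inl (i : Fin (k + 1)) : ((broom n k l).crew π (Sum.inl i)).card = n := by
    rw [crew_broom_inl hπ]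
    exact Finset.card_fin n
  have card_crew_inr (j : Fin l) : ((broom n k l).crew π (Sum.inr j)).card = 1 := by
    rw [(isLeaf_broom_inr j).crew_eq Sum.inr_ne_inl, Finset.card_singleton]
  rw [unweighted_broom.totalCost_eq_sum_card_crew]
  refine (sum_ne_inl_zero _).trans ?_
  simp only [card_crew_inl, card_crew_inr, Finset.sum_const, Finset.card_univ, Fintype.card_fin,
    nsmul_eq_mul, Nat.cast_one, mul_one, mul_comm (k : ℝ)]

end Broom

/-- For all `n ≥ 1` and `m ≥ n + 1` there is an unweighted
instance with `n` agents and `m` orders — a path with one endpoint at the hub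
whose other endpoint has `n` leaves attached — which admits a non-wasteful
allocation of total cost `n·(m − n + 1)`, while the minimum total cost over all
allocations equals `m`. -/
theorem stmt7 (n m : ℕ) (hn : 1 ≤ n) (hm : n + 1 ≤ m) :
    ∃ I : DeliveryInstance, I.Unweighted ∧ I.n = n ∧
      Fintype.card {v : I.V // v ≠ I.hub} = m ∧
      (∃ (p : Fin (m - n) → I.V) (q : Fin n → I.V),
        Function.Injective p ∧ Function.Injective q ∧
        (∀ i j, p i ≠ q j) ∧ (∀ i, p i ≠ I.hub) ∧ (∀ j, q j ≠ I.hub) ∧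
        (∀ v : I.V, v = I.hub ∨ (∃ i, v = p i) ∨ (∃ j, v = q j)) ∧
        I.par (p ⟨0, by omega⟩) = I.hub ∧
        (∀ (i : Fin (m - n)) (h : (i : ℕ) + 1 < m - n),
          I.par (p ⟨(i : ℕ) + 1, h⟩) = p i) ∧
        (∀ j, I.par (q j) = p ⟨m - n - 1, by omega⟩)) ∧
      (∃ π : I.V → Fin I.n, I.NonWasteful π ∧
        I.totalCost π = (n : ℝ) * ((m : ℝ) - (n : ℝ) + 1)) ∧
      (∀ π : I.V → Fin I.n, (m : ℝ) ≤ I.totalCost π) ∧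
      (∃ π : I.V → Fin I.n, I.totalCost π = (m : ℝ)) := by
  have : NeZero n := ⟨by omega⟩
  let I := broom n (m - n) n
  have card_orders : Fintype.card {v : I.V // v ≠ I.hub} = m := by
    rw [card_ne_hub_broom, Nat.sub_add_cancel (by omega)]
  have weight : I.totalWeight = m := by rw [unweighted_broom.totalWeight_eq_card, card_orders]
  have handle_pos : 1 ≤ m - n := by omega
  have last_eq : Fin.last (m - n) = ⟨m - n - 1 + 1, by omega⟩ :=
    Fin.ext (Nat.sub_add_cancel handle_pos).symm
  let π : I.V → Fin I.n := Sum.elim (fun _ => (0 : Fin n)) id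
  have hπ : Function.Surjective fun j => π (Sum.inr j) := Function.surjective_id
  refine ⟨I, unweighted_broom, rfl, card_orders, ?_, ⟨π, nonWasteful_broom hπ, ?_⟩,
    fun π' => weight.symm.le.trans (I.totalWeight_le_totalCost π'),
    fun _ => ⟨0, I.n_pos⟩, (I.totalCost_const _).trans weight⟩
  · exact ⟨fun i => Sum.inl i.succ, Sum.inr, Sum.inl_injective.comp (Fin.succ_injective _),
      Sum.inr_injective, fun _ _ => Sum.inl_ne_inr,
      fun i => Sum.inl_injective.ne i.succ_ne_zero, fun _ => Sum.inr_ne_inl,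
      eq_inl_zero_or_inl_succ_or_inr, rfl, fun _ _ => rfl, fun _ => congrArg Sum.inl last_eq⟩
  · rw [totalCost_broom hπ, Nat.cast_sub (by omega)]
    ring
end

section
/- Let I = (N, G, h) be a delivery instance in which the hub h is a leaf of G (a vertex of degree one), let v be the unique neighbor of h, and let J = (N, G−h, v) be the instance obtained by deleting h and making v the hub. Then MMS(I) = MMS(J) + ω({h,v}). -/
/-!
Every agent with at least one order pays for the edge between the hub and its only neighbor `v`
exactly once, so deleting the hub lowers the cost of every nonempty bundle by the weight of that
edge. The vertex `v` becomes the new hub and stops being an order, which changes no cost. Bundles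
that are empty do not affect the maximum, because the agent serving `v` pays at least the weight
of that edge.
-/

namespace DeliveryInstance

section Rooted

variable {I : DeliveryInstance} {u v : I.V}

theorem anc_iff_eq_or_anc_par : I.Anc u v ↔ u = v ∨ I.Anc u (I.par v) := by
  constructor
  · rintro ⟨_ | k, hk⟩
    · exact .inl hk.symm
    · exact .inr ⟨k, hk⟩
  · rintro (rfl | ⟨k, hk⟩)
    · exact ⟨0, rfl⟩
    · exact ⟨k + 1, hk⟩

theorem anc_hub_iff : I.Anc u I.hub ↔ u = I.hub := by
  simp only [Anc, Function.iterate_fixed I.par_hub, exists_const, eq_comm]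

theorem hub_par_induction {p : I.V → Prop} (hub : p I.hub)
    (par : ∀ v, v ≠ I.hub → p (I.par v) → p v) (v : I.V) : p v := by
  obtain ⟨k, hk⟩ := I.reaches_hub v
  induction k generalizing v with
  | zero => exact (show v = I.hub from hk) ▸ hub
  | succ k ih =>
    by_cases hv : v = I.hub
    · exact hv ▸ hub
    · exact par v hv (ih (I.par v) hk)

end Rooted

section Cost

variable (I : DeliveryInstance)

/-- The edges on the paths from the hub to the vertices of `A`. Each edge is encoded by its
endpoint farther from the hub. -/
def traversed (A : Set I.V) : Set I.V :=
  {u | u ≠ I.hub ∧ ∃ v ∈ A, I.Anc u v}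

theorem cost_eq_sum_indicator_traversed (A : Set I.V) :
    I.cost A = ∑ u, (I.traversed A).indicator I.w u := rfl

theorem cost_nonneg (A : Set I.V) : 0 ≤ I.cost A :=
  Finset.sum_nonneg fun u _ => Set.indicator_apply_nonneg fun hu => (I.w_pos u hu.1).le

theorem cost_empty : I.cost ∅ = 0 := by
  simp [cost]

theorem traversed_diff_hub (A : Set I.V) : I.traversed (A \ {I.hub}) = I.traversed A := by
  ext u
  refine and_congr_right fun hu => exists_congr fun v => ⟨fun h => ⟨h.1.1, h.2⟩, fun h => ?_⟩
  refine ⟨⟨h.1, ?_⟩, h.2⟩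
  rintro rfl
  exact hu (anc_hub_iff.1 h.2)

theorem cost_bundle (π : I.V → Fin I.n) (i : Fin I.n) :
    I.cost (I.bundle π i) = I.cost (π ⁻¹' {i}) := by
  have bundle_eq : I.bundle π i = π ⁻¹' {i} \ {I.hub} := Set.ext fun _ => and_comm
  rw [bundle_eq, cost_eq_sum_indicator_traversed, traversed_diff_hub,
    cost_eq_sum_indicator_traversed]

theorem maxCost_le_iff {π : I.V → Fin I.n} {c : ℝ} :
    I.maxCost π ≤ c ↔ ∀ i, I.cost (π ⁻¹' {i}) ≤ c :=
  (Finset.sup'_le_iff _ _).trans <| by simp only [Finset.mem_univ, forall_const, cost_bundle]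

-- The number of agents is a free variable, so that allocations of two instances can be compared
-- without casts between their types of agents.
theorem MMSshare_le_iff {n : ℕ} (hn : I.n = n) {c : ℝ} :
    I.MMSshare ≤ c ↔ ∃ π : I.V → Fin n, ∀ i, I.cost (π ⁻¹' {i}) ≤ c := by
  subst hn
  exact (Finset.inf'_le_iff _).trans <| by simp only [Finset.mem_univ, true_and, maxCost_le_iff]

end Cost

/-- The map `φ` identifies `J` with the instance obtained from `I` by deleting the hub and making
`φ J.hub` the new hub. That the old hub is a leaf is encoded by `map_par`: no vertex other than
`φ J.hub` can have the old hub as its parent, since the range of `φ` avoids it. -/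
structure IsHubDeletion (I J : DeliveryInstance) (φ : J.V → I.V) : Prop where
  injective : Function.Injective φ
  range_eq : Set.range φ = {I.hub}ᶜ
  par_map_hub : I.par (φ J.hub) = I.hub
  map_par : ∀ x, x ≠ J.hub → φ (J.par x) = I.par (φ x)
  w_eq : ∀ x, x ≠ J.hub → J.w x = I.w (φ x)

namespace IsHubDeletion

variable {I J : DeliveryInstance} {φ : J.V → I.V} (h : IsHubDeletion I J φ)
include h

theorem map_ne_hub (x : J.V) : φ x ≠ I.hub :=
  h.range_eq.subset (Set.mem_range_self x)

theorem exists_map_eq {u : I.V} (hu : u ≠ I.hub) : ∃ x, φ x = u :=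
  h.range_eq.superset hu

theorem anc_map_iff {x y : J.V} : I.Anc (φ x) (φ y) ↔ J.Anc x y := by
  induction y using hub_par_induction with
  | hub =>
    rw [anc_iff_eq_or_anc_par, h.par_map_hub, anc_hub_iff, anc_hub_iff, h.injective.eq_iff,
      or_iff_left (h.map_ne_hub x)]
  | par y hy ih =>
    rw [anc_iff_eq_or_anc_par, ← h.map_par y hy, ih, h.injective.eq_iff,
      ← anc_iff_eq_or_anc_par]

theorem map_mem_traversed_iff {A : Set I.V} {x : J.V} :
    φ x ∈ I.traversed A ↔ ∃ y ∈ φ ⁻¹' A, J.Anc x y := by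
  constructor
  · rintro ⟨hx, a, ha, hxa⟩
    have a_ne_hub : a ≠ I.hub := by
      rintro rfl
      exact hx (anc_hub_iff.1 hxa)
    obtain ⟨y, rfl⟩ := h.exists_map_eq a_ne_hub
    exact ⟨y, ha, h.anc_map_iff.1 hxa⟩
  · rintro ⟨y, hy, hxy⟩
    exact ⟨h.map_ne_hub x, φ y, hy, h.anc_map_iff.2 hxy⟩

theorem map_hub_mem_traversed_iff {A : Set I.V} :
    φ J.hub ∈ I.traversed A ↔ (φ ⁻¹' A).Nonempty := by
  rw [h.map_mem_traversed_iff]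
  exact exists_congr fun y => and_iff_left (J.reaches_hub y)

theorem indicator_traversed_map {A : Set I.V} {x : J.V} (hx : x ≠ J.hub) :
    (I.traversed A).indicator I.w (φ x) = (J.traversed (φ ⁻¹' A)).indicator J.w x := by
  classical
  have mem_iff : φ x ∈ I.traversed A ↔ x ∈ J.traversed (φ ⁻¹' A) :=
    h.map_mem_traversed_iff.trans (and_iff_right hx).symm
  simp only [Set.indicator_apply, mem_iff, h.w_eq x hx]

theorem cost_eq_cost_preimage_add_indicator (A : Set I.V) :
    I.cost A = J.cost (φ ⁻¹' A) + (I.traversed A).indicator I.w (φ J.hub) := by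
  have sum_map : ∑ x, (I.traversed A).indicator I.w (φ x) = I.cost A := by
    refine Fintype.sum_of_injective φ h.injective _ _ (fun u hu => ?_) fun _ => rfl
    have u_eq_hub : u = I.hub := by simpa [h.range_eq] using hu
    exact Set.indicator_of_notMem (fun hmem => hmem.1 u_eq_hub) _
  have indicator_hub : (J.traversed (φ ⁻¹' A)).indicator J.w J.hub = 0 :=
    Set.indicator_of_notMem (fun hmem => hmem.1 rfl) _
  rw [← sum_map, cost_eq_sum_indicator_traversed, Fintype.sum_eq_add_sum_compl J.hub,
    Fintype.sum_eq_add_sum_compl J.hub, indicator_hub, zero_add, add_comm]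
  congr 1
  exact Finset.sum_congr rfl fun x hx => h.indicator_traversed_map (by simpa using hx)

theorem cost_eq_cost_preimage_add {A : Set I.V} (hA : (φ ⁻¹' A).Nonempty) :
    I.cost A = J.cost (φ ⁻¹' A) + I.w (φ J.hub) := by
  rw [h.cost_eq_cost_preimage_add_indicator,
    Set.indicator_of_mem (h.map_hub_mem_traversed_iff.2 hA)]

theorem cost_le_cost_preimage_add (A : Set I.V) :
    I.cost A ≤ J.cost (φ ⁻¹' A) + I.w (φ J.hub) := by
  rw [h.cost_eq_cost_preimage_add_indicator]
  gcongr
  exact Set.indicator_apply_le' (fun _ => le_rfl) fun _ => (I.w_pos _ (h.map_ne_hub _)).le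

theorem forall_cost_fiber_le_iff {ι : Type*} (ρ : I.V → ι) {c : ℝ} :
    (∀ i, I.cost (ρ ⁻¹' {i}) ≤ c + I.w (φ J.hub)) ↔ ∀ i, J.cost (φ ⁻¹' (ρ ⁻¹' {i})) ≤ c := by
  constructor
  · intro hρ
    have le_of_nonempty : ∀ i, (φ ⁻¹' (ρ ⁻¹' {i})).Nonempty → J.cost (φ ⁻¹' (ρ ⁻¹' {i})) ≤ c := by
      intro i hi
      rw [← add_le_add_iff_right (I.w (φ J.hub)), ← h.cost_eq_cost_preimage_add hi]
      exact hρ i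
    intro i
    obtain hi | hi := (φ ⁻¹' (ρ ⁻¹' {i})).eq_empty_or_nonempty
    · calc J.cost (φ ⁻¹' (ρ ⁻¹' {i})) = 0 := by rw [hi, cost_empty]
        _ ≤ J.cost (φ ⁻¹' (ρ ⁻¹' {ρ (φ J.hub)})) := J.cost_nonneg _
        _ ≤ c := le_of_nonempty _ ⟨J.hub, rfl⟩
    · exact le_of_nonempty i hi
  · intro hπ i
    exact (h.cost_le_cost_preimage_add _).trans (add_le_add_left (hπ i) _)

theorem MMSshare_eq (hn : J.n = I.n) : I.MMSshare = J.MMSshare + I.w (φ J.hub) := by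
  have : Nonempty (Fin I.n) := ⟨⟨0, I.n_pos⟩⟩
  have restrict_surjective : Function.Surjective fun ρ : I.V → Fin I.n => ρ ∘ φ :=
    h.injective.surjective_comp_right
  refine eq_of_forall_ge_iff fun c => ?_
  calc I.MMSshare ≤ c
      ↔ ∃ ρ : I.V → Fin I.n, ∀ i, I.cost (ρ ⁻¹' {i}) ≤ c - I.w (φ J.hub) + I.w (φ J.hub) := by
        rw [sub_add_cancel, I.MMSshare_le_iff rfl]
    _ ↔ ∃ ρ : I.V → Fin I.n, ∀ i, J.cost (φ ⁻¹' (ρ ⁻¹' {i})) ≤ c - I.w (φ J.hub) :=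
        exists_congr fun ρ => h.forall_cost_fiber_le_iff ρ
    _ ↔ J.MMSshare ≤ c - I.w (φ J.hub) := by
        simp only [J.MMSshare_le_iff hn, restrict_surjective.exists, Set.preimage_comp]
    _ ↔ J.MMSshare + I.w (φ J.hub) ≤ c := le_sub_iff_add_le

end IsHubDeletion

end DeliveryInstance

/-- If the hub of instance `I` is a leaf (degree-one vertex)
of the tree with unique neighbor `v`, and `J` is the instance obtained from `I`
by deleting the hub and making `v` the hub, then
`MMS(I) = MMS(J) + ω({hub, v})`. -/
theorem stmt10 (I J : DeliveryInstance) (v : I.V) (hv : v ≠ I.hub)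
    (hchild : I.par v = I.hub)
    (hdeg : ∀ u : I.V, I.par u = I.hub → u = I.hub ∨ u = v)
    (hn : J.n = I.n)
    (e : J.V ≃ {x : I.V // x ≠ I.hub})
    (hhub : (e J.hub).1 = v)
    (hw : ∀ x : J.V, x ≠ J.hub → J.w x = I.w (e x).1)
    (hpar : ∀ x : J.V,
      (e (J.par x)).1 = if I.par (e x).1 = I.hub then (e x).1 else I.par (e x).1) :
    I.MMSshare = J.MMSshare + I.w v := by
  have deletion : DeliveryInstance.IsHubDeletion I J fun x => (e x).1 :=
    { injective := Subtype.val_injective.comp e.injective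
      range_eq := (e.surjective.range_comp Subtype.val).trans Subtype.range_coe
      par_map_hub := by rw [hhub, hchild]
      map_par := fun x hx => by
        have par_ne_hub : I.par (e x).1 ≠ I.hub := fun hp =>
          hx (e.injective (Subtype.ext (((hdeg _ hp).resolve_left (e x).2).trans hhub.symm)))
        rw [hpar, if_neg par_ne_hub]
      w_eq := hw }
  rw [deletion.MMSshare_eq hn, hhub]
end

section
/- Let I be an unweighted delivery instance, and partition the leaves of G (rooted at the hub h) into types T_1,…,T_k, where two leaves have the same type if and only if they have the same parent. Call an allocation π' nice if for every pair of distinct agents i, j ∈ N there is at most one type t ∈ [k] with π'_i ∩ T_t ≠ ∅ and π'_j ∩ T_t ≠ ∅. Then for every allocation π there exists a nice allocation π' with cost(π'_i) ≤ cost(π_i) for every agent i ∈ N. -/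
/-- An allocation is *nice* if for every pair of distinct agents there is at
most one leaf type (leaves have the same type iff they have the same parent)
from which both agents service a leaf. -/
def DeliveryInstance.Nice (I : DeliveryInstance) (π : I.V → Fin I.n) : Prop :=
  ∀ i j : Fin I.n, i ≠ j → ∀ p q : I.V,
    (∃ l ∈ I.bundle π i, I.IsLeaf l ∧ I.par l = p) →
    (∃ l ∈ I.bundle π j, I.IsLeaf l ∧ I.par l = p) →
    (∃ l ∈ I.bundle π i, I.IsLeaf l ∧ I.par l = q) →
    (∃ l ∈ I.bundle π j, I.IsLeaf l ∧ I.par l = q) →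
    p = q

/-!
Suppose agents `i < j` both service leaves of the types `p` and `q`. If `j` hands a leaf of type `p`
to `i` in exchange for a leaf of type `q`, then each of them already services a sibling of the leaf
received, so both still pay for the same internal edges; only the two leaf edges are exchanged, and
these have equal weights. If the vertices are listed parent by parent, with the children of `p`
before those of `q`, this exchange makes the sequence of their owners lexicographically smaller.
Hence an allocation which is lexicographically minimal among those that are at most as costly as `π`
for every agent is nice.
-/

theorem exists_mem_forall_comp_swap_notMem {α β γ : Type*} [Finite α] [DecidableEq α]
    [LinearOrder β] [LT γ] [WellFoundedLT γ] (f : α → β) {S : Set (α → γ)} (hS : S.Nonempty) :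
    ∃ g ∈ S, ∀ a b, f a < f b → g b < g a → g ∘ Equiv.swap a b ∉ S := by
  -- Order `α` so that `f` is monotone, and minimize `g` lexicographically.
  let key : α → β ×ₗ Fin (Nat.card α) := fun a => toLex (f a, Finite.equivFin α a)
  have key_injective : Function.Injective key := fun a b h =>
    (Finite.equivFin α).injective (congrArg (fun x => (ofLex x).2) h)
  let _ : LinearOrder α := LinearOrder.lift' key key_injective
  obtain ⟨g, hg, hmin⟩ := (InvImage.wf toLex (wellFounded_lt (α := Lex (α → γ)))).has_min S hS
  refine ⟨g, hg, fun a b hab hba hmem => hmin _ hmem (Pi.lex_desc (le_of_lt ?_) hba)⟩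
  exact show key a < key b from Prod.Lex.toLex_lt_toLex.2 (Or.inl hab)

namespace DeliveryInstance

variable {I : DeliveryInstance} {A B : Set I.V} {a b u v : I.V} {π : I.V → Fin I.n}

theorem IsLeaf.eq_of_anc (ha : I.IsLeaf a) (h : I.Anc a v) : v = a := by
  obtain ⟨k, hk⟩ := h
  induction k generalizing v with
  | zero => exact hk
  | succ k ih => exact ha v (ih hk)

theorem Anc.of_par_eq (h : I.Anc u v) (huv : u ≠ v) (hpar : I.par a = I.par v) : I.Anc u a := by
  obtain ⟨_ | k, hk⟩ := h
  · exact absurd hk.symm huv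
  · exact ⟨k + 1, by rwa [Function.iterate_succ_apply, hpar]⟩

/-- The edges that lie on the path from the hub to some vertex of `A`, that is, the edges whose
weights add up to the cost of `A`. An edge is encoded by its endpoint farther from the hub. -/
def route (I : DeliveryInstance) (A : Set I.V) : Set I.V :=
  {u | u ≠ I.hub ∧ ∃ v ∈ A, I.Anc u v}

theorem mem_route_of_mem (hv : v ≠ I.hub) (h : v ∈ A) : v ∈ I.route A :=
  ⟨hv, v, h, 0, rfl⟩

theorem cost_le_cost_of_mapsTo_route (σ : Equiv.Perm I.V)
    (hσ : Set.MapsTo σ (I.route A) (I.route B)) (hw : ∀ u ∈ I.route A, I.w u ≤ I.w (σ u)) :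
    I.cost A ≤ I.cost B := by
  have indicator_le : (I.route A).indicator I.w ≤ fun u => (I.route B).indicator I.w (σ u) :=
    Set.indicator_le' (fun u hu => by rw [Set.indicator_of_mem (hσ hu)]; exact hw u hu)
      (fun _ _ => Set.indicator_nonneg (fun x hx => (I.w_pos x hx.1).le) _)
  calc I.cost A ≤ ∑ u, (I.route B).indicator I.w (σ u) :=
        Finset.sum_le_sum fun u _ => indicator_le u
    _ = I.cost B := Equiv.sum_comp σ _

theorem mapsTo_swap_route (ha : I.IsLeaf a) (hb : I.IsLeaf b) (ha₀ : a ≠ I.hub) (hb₀ : b ≠ I.hub)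
    (hab : b ∈ A → ∃ m ∈ A, I.par m = I.par a) (hba : a ∈ A → ∃ m ∈ A, I.par m = I.par b) :
    Set.MapsTo (Equiv.swap a b) (I.route (Equiv.swap a b ⁻¹' A)) (I.route A) := by
  rintro u ⟨hu, v, hv, huv⟩
  rw [Set.mem_preimage] at hv
  by_cases hu_a : u = a
  · subst u
    rw [ha.eq_of_anc huv] at hv
    rw [Equiv.swap_apply_left] at hv ⊢
    exact mem_route_of_mem hb₀ hv
  by_cases hu_b : u = b
  · subst u
    rw [hb.eq_of_anc huv] at hv
    rw [Equiv.swap_apply_right] at hv ⊢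
    exact mem_route_of_mem ha₀ hv
  -- The other edges on the way to an exchanged leaf are also on the way to its sibling in `A`.
  rw [Equiv.swap_apply_of_ne_of_ne hu_a hu_b]
  refine ⟨hu, ?_⟩
  by_cases hv_a : v = a
  · subst v
    rw [Equiv.swap_apply_left] at hv
    obtain ⟨m, hm, hpar⟩ := hab hv
    exact ⟨m, hm, huv.of_par_eq hu_a hpar⟩
  by_cases hv_b : v = b
  · subst v
    rw [Equiv.swap_apply_right] at hv
    obtain ⟨m, hm, hpar⟩ := hba hv
    exact ⟨m, hm, huv.of_par_eq hu_b hpar⟩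
  rw [Equiv.swap_apply_of_ne_of_ne hv_a hv_b] at hv
  exact ⟨v, hv, huv⟩

theorem cost_preimage_swap_le (ha : I.IsLeaf a) (hb : I.IsLeaf b) (ha₀ : a ≠ I.hub)
    (hb₀ : b ≠ I.hub) (hw : I.w a = I.w b) (hab : b ∈ A → ∃ m ∈ A, I.par m = I.par a)
    (hba : a ∈ A → ∃ m ∈ A, I.par m = I.par b) :
    I.cost (Equiv.swap a b ⁻¹' A) ≤ I.cost A :=
  cost_le_cost_of_mapsTo_route (Equiv.swap a b) (mapsTo_swap_route ha hb ha₀ hb₀ hab hba)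
    fun _ _ => (Equiv.apply_swap_eq_self hw _).ge

theorem bundle_comp_of_injective {f : I.V → I.V} (hf : Function.Injective f)
    (hf₀ : f I.hub = I.hub) (i : Fin I.n) : I.bundle (π ∘ f) i = f ⁻¹' I.bundle π i :=
  Set.ext fun _ => and_congr_left' (not_congr (hf.eq_iff' hf₀).symm)

/-- Agent `i` services a leaf whose parent is `p`. The type of a leaf is encoded by its
parent, so `p` stands for the type formed by the leaves with parent `p`. -/
def ServicesType (I : DeliveryInstance) (π : I.V → Fin I.n) (i : Fin I.n) (p : I.V) : Prop :=
  ∃ l ∈ I.bundle π i, I.IsLeaf l ∧ I.par l = p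

theorem exists_swap_forall_cost_le {c : ℝ} (hw : ∀ l, l ≠ I.hub → I.IsLeaf l → I.w l = c)
    {i j : Fin I.n} {p q : I.V} (hip : I.ServicesType π i p) (hjp : I.ServicesType π j p)
    (hiq : I.ServicesType π i q) (hjq : I.ServicesType π j q) :
    ∃ a b, I.par a = p ∧ I.par b = q ∧ π a = j ∧ π b = i ∧
      ∀ k, I.cost (I.bundle (π ∘ Equiv.swap a b) k) ≤ I.cost (I.bundle π k) := by
  obtain ⟨m, hm, -, hmp⟩ := hip
  obtain ⟨a, ⟨ha₀, haj⟩, ha, hap⟩ := hjp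
  obtain ⟨b, ⟨hb₀, hbi⟩, hb, hbq⟩ := hiq
  obtain ⟨m', hm', -, hmq⟩ := hjq
  refine ⟨a, b, hap, hbq, haj, hbi, fun k => ?_⟩
  rw [bundle_comp_of_injective (Equiv.injective _)
    (Equiv.swap_apply_of_ne_of_ne ha₀.symm hb₀.symm)]
  refine cost_preimage_swap_le ha hb ha₀ hb₀ ((hw a ha₀ ha).trans (hw b hb₀ hb).symm) ?_ ?_
  · rintro ⟨-, rfl⟩
    exact ⟨m, hbi ▸ hm, hmp.trans hap.symm⟩
  · rintro ⟨-, rfl⟩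
    exact ⟨m', haj ▸ hm', hmq.trans hbq.symm⟩

end DeliveryInstance

theorem stmt11_general (I : DeliveryInstance) {c : ℝ}
    (hw : ∀ l, l ≠ I.hub → I.IsLeaf l → I.w l = c) (π : I.V → Fin I.n) :
    ∃ π' : I.V → Fin I.n, I.Nice π' ∧
      ∀ i : Fin I.n, I.cost (I.bundle π' i) ≤ I.cost (I.bundle π i) := by
  let e := Finite.equivFin I.V
  obtain ⟨ρ, hρ, hmin⟩ := exists_mem_forall_comp_swap_notMem (e ∘ I.par)
    (S := {ρ | ∀ i, I.cost (I.bundle ρ i) ≤ I.cost (I.bundle π i)}) ⟨π, fun _ => le_rfl⟩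
  refine ⟨ρ, fun i j hij p q hip hjp hiq hjq => ?_, hρ⟩
  by_contra! hpq
  wlog hlt : i < j generalizing i j
  · exact this j i hij.symm hjp hip hjq hiq (hij.symm.lt_of_le (not_lt.1 hlt))
  wlog hlt' : e p < e q generalizing p q
  · exact this q p hpq.symm hiq hjq hip hjp
      ((e.injective.ne hpq.symm).lt_of_le (not_lt.1 hlt'))
  obtain ⟨a, b, rfl, rfl, rfl, rfl, hle⟩ :=
    DeliveryInstance.exists_swap_forall_cost_le hw hip hjp hiq hjq
  exact hmin a b hlt' hlt fun k => (hle k).trans (hρ k)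

/-- In an unweighted instance, every allocation can be turned
into a nice allocation without increasing any agent's cost. -/
theorem stmt11 (I : DeliveryInstance) (hU : I.Unweighted) (π : I.V → Fin I.n) :
    ∃ π' : I.V → Fin I.n, I.Nice π' ∧
      ∀ i : Fin I.n, I.cost (I.bundle π' i) ≤ I.cost (I.bundle π i) :=
  stmt11_general I (fun l hl _ => hU l hl) π
end
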